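/- Let $K\ge 2$, $n\ge 1$, let $y\in\{1,\dots,K\}$, and let $V_1,\dots,V_n$ be random variables with values in $\{1,\dots,K\}$ such that the events $\{V_i=y\}$, $i=1,\dots,n$, are mutually independent, with $P(V_i=y)=p_i$ and $\bar p:=\frac{1}{n}\sum_{i=1}^n p_i>1/2$. Then the probability that $y$ fails to be the strict plurality winner of the votes, i.e. $P\big(\exists\,k\ne y:\ \#\{i: V_i=k\}\ge \#\{i: V_i=y\}\big)$, is at most $\exp\big(-\tfrac{n}{2}\,\xi(\bar p)\big)$, where $\xi(z):=2z-1-\log(2z)$. -/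

import Mathlib

/-!
The event is controlled by a Chernoff bound. If some `k ≠ y` receives at least as many votes as
`y`, then, the two sets of voters being disjoint, `y` receives at most `n / 2` votes. The number
`S` of votes for `y` is a sum of independent indicators, whose moment generating functions are
`1 + qᵢ (eᵗ - 1) ≤ exp (pᵢ (eᵗ - 1))` for `t ≤ 0` (`mgf_indicator_one_le`), where `qᵢ` is the
probability of a vote for `y`. Hence `P(S ≤ n / 2) ≤ exp (-t n / 2 + n p̄ (eᵗ - 1))`, and the optimal
choice `eᵗ = 1 / (2 p̄)` gives exactly the stated bound.
-/

open MeasureTheory ProbabilityTheory Finset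

/-- The Poisson bound `1 + q (eᵗ - 1) ≤ exp (q (eᵗ - 1))` with `q = P(A)`, relaxed for `t ≤ 0` to
any `p ≤ q`. The relaxation matters because `P(A) = ENNReal.ofReal p` allows a negative `p`. -/
lemma mgf_indicator_one_le {Ω : Type*} [MeasurableSpace Ω] (P : Measure Ω)
    [IsProbabilityMeasure P] {A : Set Ω} (hA : MeasurableSet A) {p t : ℝ}
    (hp : p ≤ P.real A) (ht : t ≤ 0) :
    mgf (A.indicator fun _ => (1 : ℝ)) P t ≤ Real.exp (p * (Real.exp t - 1)) := by
  have hpt : ∀ ω, Real.exp (t * A.indicator (fun _ => (1 : ℝ)) ω)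
      = 1 + A.indicator (fun _ => Real.exp t - 1) ω := by
    intro ω
    by_cases h : ω ∈ A <;> simp [h]
  have hmgf : mgf (A.indicator fun _ => (1 : ℝ)) P t = 1 + P.real A * (Real.exp t - 1) := by
    simp only [mgf, hpt]
    rw [integral_add (integrable_const _) ((integrable_const _).indicator hA),
      integral_indicator_const _ hA]
    simp
  have het : Real.exp t - 1 ≤ 0 := by linarith [Real.exp_le_one_iff.2 ht]
  rw [hmgf]
  linarith [mul_le_mul_of_nonpos_right hp het, Real.add_one_le_exp (p * (Real.exp t - 1))]

/-- If `y` is not the strict plurality winner, then it receives at most half of the votes. -/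
lemma two_mul_card_le_of_card_le {K n : ℕ} {y k : Fin K} (v : Fin n → Fin K) (hk : k ≠ y)
    (h : (univ.filter fun i => v i = y).card ≤ (univ.filter fun i => v i = k).card) :
    2 * (univ.filter fun i => v i = y).card ≤ n := by
  have hdisj : Disjoint (univ.filter fun i => v i = y) (univ.filter fun i => v i = k) := by
    rw [Finset.disjoint_filter]
    rintro i - h1 h2
    exact hk (h2.symm.trans h1)
  have hcard := Finset.card_le_univ
    ((univ.filter fun i => v i = y) ∪ (univ.filter fun i => v i = k))
  rw [Finset.card_union_of_disjoint hdisj, Fintype.card_fin] at hcard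
  omega


/-- Probabilistic content of Theorem 3.1: if the events `{Vᵢ = y}` are mutually
independent with `P(Vᵢ = y) = pᵢ` and `p̄ = (∑ pᵢ)/n > 1/2`, then the probability
that `y` fails to be the strict plurality winner of the votes `V₁,…,Vₙ` is at most
`exp(-(n/2) ξ(p̄))` with `ξ(z) = 2z - 1 - log(2z)`. -/
theorem plurality_failure_bound
    {Ω : Type*} [MeasurableSpace Ω] (P : Measure Ω) [IsProbabilityMeasure P]
    (K n : ℕ) (hK : 2 ≤ K) (hn : 1 ≤ n) (y : Fin K)
    (V : Fin n → Ω → Fin K) (hmeas : ∀ i, Measurable (V i))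
    (p : Fin n → ℝ)
    (hp : ∀ i, P {ω | V i ω = y} = ENNReal.ofReal (p i))
    (hindep : iIndepSet (fun i => {ω | V i ω = y}) P)
    (hbar : 1 / 2 < (∑ i, p i) / n) :
    P {ω | ∃ k, k ≠ y ∧
        (univ.filter (fun i => V i ω = y)).card ≤
          (univ.filter (fun i => V i ω = k)).card} ≤
      ENNReal.ofReal
        (Real.exp (-(n / 2 : ℝ) *
          (2 * ((∑ i, p i) / n) - 1 - Real.log (2 * ((∑ i, p i) / n))))) := by
  set A : Fin n → Set Ω := fun i => {ω | V i ω = y} with hAdef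
  have hA : ∀ i, MeasurableSet (A i) := fun i => hmeas i (measurableSet_singleton y)
  set X : Fin n → Ω → ℝ := fun i => (A i).indicator fun _ => (1 : ℝ) with hXdef
  have hX : ∀ i, Measurable (X i) := fun i => measurable_const.indicator (hA i)
  have hXind : iIndepFun X P := hindep.iIndepFun_indicator
  have hpA : ∀ i, p i ≤ P.real (A i) := fun i => by
    rw [measureReal_def, hp i, ENNReal.toReal_ofReal']
    exact le_max_left _ _
  set q : ℝ := (∑ i, p i) / n with hq
  have hn0 : (n : ℝ) ≠ 0 := by positivity
  have hq0 : 0 < q := by linarith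
  have hsum : ∑ i, p i = n * q := by rw [hq]; field_simp
  -- The optimal Chernoff parameter, `exp t = 1 / (2 q)`.
  set t : ℝ := -Real.log (2 * q) with ht
  have ht0 : t ≤ 0 := neg_nonpos.2 (Real.log_nonneg (by linarith))
  have het : Real.exp t = (2 * q)⁻¹ := by
    rw [ht, Real.exp_neg, Real.exp_log (by linarith)]
  have hint : Integrable (fun ω => Real.exp (t * (∑ i, X i) ω)) P :=
    hXind.integrable_exp_mul_sum hX fun i _ => by
      refine Integrable.of_bound ((hX i).const_mul t).exp.aestronglyMeasurable 1
        (Filter.Eventually.of_forall fun ω => ?_)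
      rw [Real.norm_eq_abs, Real.abs_exp, Real.exp_le_one_iff]
      exact mul_nonpos_of_nonpos_of_nonneg ht0
        (Set.indicator_nonneg (fun _ _ => zero_le_one) ω)
  have hsub : {ω | ∃ k, k ≠ y ∧ (univ.filter (fun i => V i ω = y)).card ≤
      (univ.filter (fun i => V i ω = k)).card} ⊆ {ω | (∑ i, X i) ω ≤ (n : ℝ) / 2} := by
    rintro ω ⟨k, hk, hle⟩
    have h2 : (2 * (univ.filter fun i => V i ω = y).card : ℝ) ≤ n := by
      exact_mod_cast two_mul_card_le_of_card_le (fun i => V i ω) hk hle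
    have hS : (∑ i, X i) ω = (univ.filter fun i => V i ω = y).card := by
      simp [hXdef, hAdef, Set.indicator_apply, Finset.sum_apply]
    rw [Set.mem_ofPred_eq, hS]
    linarith
  have hmgf : mgf (∑ i, X i) P t ≤ Real.exp (n * q * (Real.exp t - 1)) := by
    rw [hXind.mgf_sum hX, ← hsum, Finset.sum_mul, Real.exp_sum]
    exact Finset.prod_le_prod (fun i _ => mgf_nonneg)
      fun i _ => mgf_indicator_one_le P (hA i) (hpA i) ht0
  refine (measure_mono hsub).trans ?_
  rw [← ofReal_measureReal]
  refine ENNReal.ofReal_le_ofReal ((measure_le_le_exp_mul_mgf _ ht0 hint).trans ?_)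
  refine (mul_le_mul_of_nonneg_left hmgf (Real.exp_nonneg _)).trans_eq ?_
  rw [← Real.exp_add, het, ht]
  congr 1
  field_simp
  ring
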